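/- arXiv:2508.12624 — 3 statements merged into one kernel-verified Lean document; each statement's English description precedes it below -/
import Mathlib

section
/- Let Λ be a symplectic lattice admitting an orthogonal direct sum decomposition Λ = U ⊕ Λ' (i.e., of type with d₁ = 1). Then for every element x of the discriminant group D_Λ there exists a primitive vector v ∈ Λ with [v*] = x; that is, the map v ↦ [v*] from primitive vectors of Λ to D_Λ is surjective. -/
noncomputable section

open Submodule

variable {V : Type} [AddCommGroup V] [Module ℚ V]

/-- The dual lattice `Λ^∨ = {v ∈ Λ⊗ℚ : (v, Λ) ⊆ ℤ}` of a lattice `L` (inside the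
ambient rational vector space `V = Λ⊗ℚ`) with respect to the form `B`. -/
def dualLattice (B : V →ₗ[ℚ] V →ₗ[ℚ] ℚ) (L : Submodule ℤ V) : Submodule ℤ V where
  carrier := {v : V | ∀ x ∈ L, ∃ n : ℤ, B v x = (n : ℚ)}
  zero_mem' := fun x _ => ⟨0, by simp⟩
  add_mem' := by
    intro a b ha hb x hx
    obtain ⟨n, hn⟩ := ha x hx
    obtain ⟨m, hm⟩ := hb x hx
    exact ⟨n + m, by rw [map_add, LinearMap.add_apply, hn, hm]; push_cast; ring⟩
  smul_mem' := by
    intro c a ha x hx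
    obtain ⟨n, hn⟩ := ha x hx
    refine ⟨c * n, ?_⟩
    have h1 : B (c • a) x = (B.flip x) (c • a) := rfl
    rw [h1, map_zsmul, LinearMap.flip_apply, hn, zsmul_eq_mul]
    push_cast; ring

/-- A vector `v` is primitive in the lattice `L` if `ℚv ∩ L = ℤv`. -/
def IsPrimitive (L : Submodule ℤ V) (v : V) : Prop :=
  v ∈ L ∧ (Submodule.span ℚ {v}).restrictScalars ℤ ⊓ L = Submodule.span ℤ {v}

/-- `div(v) = d`, i.e. the ideal `(v, L) ⊆ ℤ` is generated by the positive integer `d`. -/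
def HasDiv (B : V →ₗ[ℚ] V →ₗ[ℚ] ℚ) (L : Submodule ℤ V) (v : V) (d : ℕ) : Prop :=
  0 < d ∧ (∀ x ∈ L, ∃ n : ℤ, B v x = (n : ℚ) * (d : ℚ)) ∧ (∃ x ∈ L, B v x = (d : ℚ))

/-- `v* = v / div(v)`. -/
def vstar (v : V) (d : ℕ) : V := ((d : ℚ))⁻¹ • v

lemma vstar_mem {B : V →ₗ[ℚ] V →ₗ[ℚ] ℚ} {L : Submodule ℤ V} {v : V} {d : ℕ}
    (h : HasDiv B L v d) : vstar v d ∈ dualLattice B L := by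
  intro x hx
  obtain ⟨n, hn⟩ := h.2.1 x hx
  refine ⟨n, ?_⟩
  have hd : (d : ℚ) ≠ 0 := Nat.cast_ne_zero.mpr h.1.ne'
  show B (((d : ℚ))⁻¹ • v) x = (n : ℚ)
  rw [map_smul, LinearMap.smul_apply, hn, smul_eq_mul]
  field_simp

/-- The discriminant group `D_Λ = Λ^∨ / Λ`. -/
abbrev DiscGroup (B : V →ₗ[ℚ] V →ₗ[ℚ] ℚ) (L : Submodule ℤ V) :=
  dualLattice B L ⧸ (L.comap (dualLattice B L).subtype)

/-- The class of an element of the dual lattice in the discriminant group. -/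
def discCls (B : V →ₗ[ℚ] V →ₗ[ℚ] ℚ) (L : Submodule ℤ V) (v : dualLattice B L) :
    DiscGroup B L := Submodule.Quotient.mk v

/-- `γ` is an isometry of the lattice `L`, i.e. an element of `Sp(Λ)` (viewed as a
rational linear automorphism of the ambient space preserving `L` and the form). -/
def IsIsometry (B : V →ₗ[ℚ] V →ₗ[ℚ] ℚ) (L : Submodule ℤ V) (γ : V ≃ₗ[ℚ] V) : Prop :=
  (∀ v, v ∈ L ↔ γ v ∈ L) ∧ ∀ v w, B (γ v) (γ w) = B v w

/-- `γ` lies in `Γ_Λ`: it is an isometry of `L` acting trivially on the discriminant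
group, i.e. `γ(v) ≡ v mod Λ` for every `v ∈ Λ^∨`. -/
def InGamma (B : V →ₗ[ℚ] V →ₗ[ℚ] ℚ) (L : Submodule ℤ V) (γ : V ≃ₗ[ℚ] V) : Prop :=
  IsIsometry B L γ ∧ ∀ v ∈ dualLattice B L, γ v - v ∈ L

lemma isometry_dual_mem {B : V →ₗ[ℚ] V →ₗ[ℚ] ℚ} {L : Submodule ℤ V} {γ : V ≃ₗ[ℚ] V}
    (h : IsIsometry B L γ) {u : V} (hu : u ∈ dualLattice B L) :
    γ u ∈ dualLattice B L := by
  intro x hx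
  have hx' : γ.symm x ∈ L := by
    rw [h.1 (γ.symm x), LinearEquiv.apply_symm_apply]
    exact hx
  obtain ⟨n, hn⟩ := hu (γ.symm x) hx'
  refine ⟨n, ?_⟩
  have := h.2 u (γ.symm x)
  rw [LinearEquiv.apply_symm_apply] at this
  rw [this, hn]

/-- The transvection `T_{l,m} : v ↦ v + (l,v)m + (m,v)l` on the rational vector space. -/
def transvection (B : V →ₗ[ℚ] V →ₗ[ℚ] ℚ) (l m : V) : V →ₗ[ℚ] V :=
  LinearMap.id + (B l).smulRight m + (B m).smulRight l

/-- An orthogonal decomposition `Λ = U ⊕ Λ'` with `U` a hyperbolic plane spanned by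
`e, f` with `(e,f) = 1`. -/
def OrthoDecompU (B : V →ₗ[ℚ] V →ₗ[ℚ] ℚ) (L : Submodule ℤ V)
    (e f : V) (L' : Submodule ℤ V) : Prop :=
  e ∈ L ∧ f ∈ L ∧ L' ≤ L ∧ B e f = 1 ∧
  (∀ z ∈ L', B e z = 0 ∧ B f z = 0) ∧
  Submodule.span ℤ {e, f} ⊔ L' = L

/-- An orthogonal decomposition `Λ = U₁ ⊕ U₂ ⊕ Λ''` with `U₁, U₂` hyperbolic planes. -/
def OrthoDecompUU (B : V →ₗ[ℚ] V →ₗ[ℚ] ℚ) (L : Submodule ℤ V)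
    (e₁ f₁ e₂ f₂ : V) (L'' : Submodule ℤ V) : Prop :=
  e₁ ∈ L ∧ f₁ ∈ L ∧ e₂ ∈ L ∧ f₂ ∈ L ∧ L'' ≤ L ∧
  B e₁ f₁ = 1 ∧ B e₂ f₂ = 1 ∧
  B e₁ e₂ = 0 ∧ B e₁ f₂ = 0 ∧ B f₁ e₂ = 0 ∧ B f₁ f₂ = 0 ∧
  (∀ z ∈ L'', B e₁ z = 0 ∧ B f₁ z = 0 ∧ B e₂ z = 0 ∧ B f₂ z = 0) ∧
  Submodule.span ℤ {e₁, f₁} ⊔ Submodule.span ℤ {e₂, f₂} ⊔ L'' = L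

/-- An orthogonal decomposition `Λ = U ⊕ U(p) ⊕ ⋯ ⊕ U(p)`. -/
def OrthoDecompUUp (B : V →ₗ[ℚ] V →ₗ[ℚ] ℚ) (L : Submodule ℤ V) (p : ℕ)
    (e f : V) {ι : Type} (E F : ι → V) : Prop :=
  e ∈ L ∧ f ∈ L ∧ (∀ i, E i ∈ L) ∧ (∀ i, F i ∈ L) ∧
  B e f = 1 ∧ (∀ i, B (E i) (F i) = (p : ℚ)) ∧
  (∀ i, B e (E i) = 0 ∧ B e (F i) = 0 ∧ B f (E i) = 0 ∧ B f (F i) = 0) ∧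
  (∀ i j, i ≠ j → B (E i) (E j) = 0 ∧ B (E i) (F j) = 0 ∧ B (F i) (F j) = 0) ∧
  Submodule.span ℤ ({e, f} ∪ Set.range E ∪ Set.range F) = L

/-- An orthogonal decomposition `Λ = U(d₁) ⊕ ⋯ ⊕ U(d_g)`. -/
def OrthoDecompType (B : V →ₗ[ℚ] V →ₗ[ℚ] ℚ) (L : Submodule ℤ V) {g : ℕ}
    (d : Fin g → ℕ) (E F : Fin g → V) : Prop :=
  (∀ i, E i ∈ L) ∧ (∀ i, F i ∈ L) ∧
  (∀ i, B (E i) (F i) = (d i : ℚ)) ∧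
  (∀ i j, i ≠ j → B (E i) (E j) = 0 ∧ B (E i) (F j) = 0 ∧ B (F i) (F j) = 0) ∧
  Submodule.span ℤ (Set.range E ∪ Set.range F) = L

lemma coe_int_addCircle (n : ℤ) : (((n : ℚ) : AddCircle (1 : ℚ))) = 0 := by
  have hmem : ((n : ℚ)) ∈ AddSubgroup.zmultiples (1 : ℚ) := ⟨n, by simp⟩
  exact (QuotientAddGroup.eq_zero_iff _).mpr hmem

lemma bilin_antisymm (B : V →ₗ[ℚ] V →ₗ[ℚ] ℚ) (halt : ∀ v, B v v = 0) (a b : V) :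
    B a b = - B b a := by
  have h := halt (a + b)
  simp only [map_add, LinearMap.add_apply] at h
  rw [halt a, halt b] at h
  linarith

/-- The `ℚ/ℤ`-valued pairing on the dual lattice. -/
def rationalPairing (B : V →ₗ[ℚ] V →ₗ[ℚ] ℚ) (L : Submodule ℤ V) :
    dualLattice B L →ₗ[ℤ] dualLattice B L →ₗ[ℤ] AddCircle (1 : ℚ) :=
  LinearMap.mk₂ ℤ (fun v w => ((B v.1 w.1 : ℚ) : AddCircle (1 : ℚ)))
    (fun v v' w => by
      beta_reduce
      rw [Submodule.coe_add, map_add, LinearMap.add_apply]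
      exact QuotientAddGroup.mk_add (AddSubgroup.zmultiples (1 : ℚ)) _ _)
    (fun c v w => by
      beta_reduce
      have h1 : B ((c • v : dualLattice B L) : V) (w : V)
          = c • (B (v : V) (w : V)) := by
        have h2 : B ((c • v : dualLattice B L) : V) (w : V)
            = (B.flip (w : V)) ((c • v : dualLattice B L) : V) := rfl
        rw [h2, Submodule.coe_smul, map_zsmul, LinearMap.flip_apply]
      rw [h1]
      exact QuotientAddGroup.mk_zsmul (AddSubgroup.zmultiples (1 : ℚ)) _ _
    )
    (fun v w w' => by
      beta_reduce
      rw [Submodule.coe_add, map_add]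
      exact QuotientAddGroup.mk_add (AddSubgroup.zmultiples (1 : ℚ)) _ _)
    (fun c v w => by
      beta_reduce
      rw [Submodule.coe_smul, map_zsmul]
      exact QuotientAddGroup.mk_zsmul (AddSubgroup.zmultiples (1 : ℚ)) _ _)

/-- The discriminant form on `D_Λ`, with values in `ℚ/ℤ`. -/
def discForm (B : V →ₗ[ℚ] V →ₗ[ℚ] ℚ) (L : Submodule ℤ V) (halt : ∀ v, B v v = 0) :
    DiscGroup B L →ₗ[ℤ] DiscGroup B L →ₗ[ℤ] AddCircle (1 : ℚ) :=
  (Submodule.liftQ _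
    ((Submodule.liftQ _ (rationalPairing B L) (by
      intro v hv
      rw [LinearMap.mem_ker]
      refine LinearMap.ext fun w => ?_
      have hv' : (v : V) ∈ L := hv
      obtain ⟨n, hn⟩ := w.2 (v : V) hv'
      show ((B (v : V) (w : V) : ℚ) : AddCircle (1 : ℚ)) = 0
      have h3 : B (v : V) (w : V) = ((-n : ℤ) : ℚ) := by
        rw [bilin_antisymm B halt, hn]; push_cast; ring
      rw [h3]
      exact coe_int_addCircle _)).flip) (by
      intro w hw
      rw [LinearMap.mem_ker]
      refine LinearMap.ext fun x => ?_
      obtain ⟨v, rfl⟩ := Submodule.Quotient.mk_surjective _ x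
      have hw' : (w : V) ∈ L := hw
      obtain ⟨n, hn⟩ := v.2 (w : V) hw'
      show ((B (v : V) (w : V) : ℚ) : AddCircle (1 : ℚ)) = 0
      rw [hn]
      exact coe_int_addCircle _)).flip

/-- The orthogonal complement of a subgroup of the discriminant group with respect to
the discriminant form. -/
def discOrth (B : V →ₗ[ℚ] V →ₗ[ℚ] ℚ) (L : Submodule ℤ V) (halt : ∀ v, B v v = 0)
    (D' : Submodule ℤ (DiscGroup B L)) : Submodule ℤ (DiscGroup B L) :=
  ⨅ y ∈ D', LinearMap.ker ((discForm B L halt).flip y)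

/-- A splitting element of the discriminant group: `x` of order `d` lies in a subgroup
`D' ≅ (ℤ/d)²` with `D_Λ = D' ⊕ D'^⊥`. -/
def IsSplitElem (B : V →ₗ[ℚ] V →ₗ[ℚ] ℚ) (L : Submodule ℤ V) (halt : ∀ v, B v v = 0)
    (x : DiscGroup B L) : Prop :=
  ∃ D' : Submodule ℤ (DiscGroup B L), x ∈ D' ∧
    Nonempty (D' ≃+ (ZMod (addOrderOf x) × ZMod (addOrderOf x))) ∧
    D' ⊔ discOrth B L halt D' = ⊤ ∧ D' ⊓ discOrth B L halt D' = ⊥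

/-- The orthogonal complement `Λ₁^⊥ = {z ∈ Λ : (z, Λ₁) = 0}` of a sublattice inside `L`. -/
def orthCompIn (B : V →ₗ[ℚ] V →ₗ[ℚ] ℚ) (L L₁ : Submodule ℤ V) : Submodule ℤ V where
  carrier := {z | z ∈ L ∧ ∀ y ∈ L₁, B z y = 0}
  zero_mem' := ⟨L.zero_mem, fun y _ => by simp⟩
  add_mem' := by
    intro a b ha hb
    refine ⟨L.add_mem ha.1 hb.1, fun y hy => ?_⟩
    rw [map_add, LinearMap.add_apply, ha.2 y hy, hb.2 y hy, add_zero]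
  smul_mem' := by
    intro c a ha
    refine ⟨L.smul_mem c ha.1, fun y hy => ?_⟩
    have h1 : B (c • a) y = (B.flip y) (c • a) := rfl
    rw [h1, map_zsmul, LinearMap.flip_apply, ha.2 y hy, smul_zero]

/-- A splitting (primitive) vector: `v` lies in a rank 2 sublattice `Λ₁` with
`Λ = Λ₁ ⊕ Λ₁^⊥` (orthogonal direct sum). -/
def IsSplitVec (B : V →ₗ[ℚ] V →ₗ[ℚ] ℚ) (L : Submodule ℤ V) (v : V) : Prop :=
  ∃ L₁ : Submodule ℤ V, v ∈ L₁ ∧ L₁ ≤ L ∧ Module.finrank ℤ L₁ = 2 ∧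
    L₁ ⊔ orthCompIn B L L₁ = L ∧ L₁ ⊓ orthCompIn B L L₁ = ⊥

end

/-!
Let `(e, f) = 1` with `e, f ∈ Λ`, and let `u ∈ Λ^∨`. Adding an integral multiple of `e` to `u` keeps
its class in `D_Λ` and produces `w ∈ Λ^∨` with `(w, f) = 1`. Let `d` be the order of `w` in
`(Λ ⊗ ℚ) / Λ` and put `v = d w ∈ Λ`. Pairing with `f` shows that `ℚw ∩ Λ ⊆ ℤw`, and the multiples of
`w` in `Λ` are those of `d w`, so `v` is primitive. Since `(w, Λ) = ℤ`, also `div(v) = d`, so that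
`v* = w`.
-/

section QuotientOrder

theorem zsmul_mem_iff_addOrderOf_mk_dvd {R M : Type*} [Ring R] [AddCommGroup M] [Module R M]
    {N : Submodule R M} {w : M} {m : ℤ} :
    m • w ∈ N ↔ (addOrderOf (Submodule.Quotient.mk w : M ⧸ N) : ℤ) ∣ m := by
  rw [addOrderOf_dvd_iff_zsmul_eq_zero, ← Submodule.Quotient.mk_smul,
    Submodule.Quotient.mk_eq_zero]

theorem isOfFinAddOrder_mk_of_mem_span {V : Type*} [AddCommGroup V] [Module ℚ V]
    {L : Submodule ℤ V} {w : V} (hw : w ∈ Submodule.span ℚ (L : Set V)) :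
    IsOfFinAddOrder (Submodule.Quotient.mk w : V ⧸ L) := by
  obtain ⟨y, hy, z, rfl⟩ := (IsLocalization.mem_span_iff (nonZeroDivisors ℤ)).mp hw
  rw [Submodule.span_eq] at hy
  refine isOfFinAddOrder_iff_zsmul_eq_zero.mpr ⟨z, nonZeroDivisors.coe_ne_zero z, ?_⟩
  have hzy : (z : ℤ) • IsLocalization.mk' ℚ (1 : ℤ) z • y = y := by
    rw [← smul_assoc, IsLocalization.smul_mk'_self, map_one, one_smul]
  rwa [← Submodule.Quotient.mk_smul, hzy, Submodule.Quotient.mk_eq_zero]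

end QuotientOrder

section DualLattice

variable {V : Type} [AddCommGroup V] [Module ℚ V] {B : V →ₗ[ℚ] V →ₗ[ℚ] ℚ} {L : Submodule ℤ V}

theorem isPrimitive_addOrderOf_mk_nsmul (φ : V →ₗ[ℚ] ℚ) (hφ : ∀ y ∈ L, ∃ n : ℤ, φ y = n)
    {w : V} (hw : φ w = 1) :
    IsPrimitive L (addOrderOf (Submodule.Quotient.mk w : V ⧸ L) • w) := by
  set d := addOrderOf (Submodule.Quotient.mk w : V ⧸ L)
  have hdw : d • w ∈ L := by
    rw [← natCast_zsmul, zsmul_mem_iff_addOrderOf_mk_dvd]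
  refine ⟨hdw, le_antisymm ?_ ?_⟩
  · rintro y ⟨hyw, hyL⟩
    obtain ⟨q, rfl⟩ := Submodule.mem_span_singleton.mp hyw
    obtain ⟨m, hm⟩ := hφ _ hyL
    have hqd : q * d = m := by simpa [hw] using hm
    have hqm : q • d • w = m • w := by
      rw [← Nat.cast_smul_eq_nsmul ℚ, smul_smul, hqd, Int.cast_smul_eq_zsmul]
    obtain ⟨c, rfl⟩ := zsmul_mem_iff_addOrderOf_mk_dvd.mp (hqm ▸ hyL)
    refine Submodule.mem_span_singleton.mpr ⟨c, ?_⟩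
    rw [hqm, mul_comm, mul_zsmul, natCast_zsmul]
  · rw [Submodule.span_singleton_le_iff_mem]
    exact ⟨Submodule.mem_span_singleton_self _, hdw⟩

theorem hasDiv_nsmul {w f : V} (hw : w ∈ dualLattice B L) (hf : f ∈ L) (hwf : B w f = 1)
    {d : ℕ} (hd : 0 < d) : HasDiv B L (d • w) d := by
  have hB (y : V) : B (d • w) y = B w y * d := by
    rw [map_nsmul, LinearMap.smul_apply, nsmul_eq_mul, mul_comm]
  refine ⟨hd, fun y hy => ?_, f, hf, by rw [hB, hwf, one_mul]⟩
  obtain ⟨n, hn⟩ := hw y hy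
  exact ⟨n, by rw [hB, hn]⟩

theorem vstar_nsmul (w : V) {d : ℕ} (hd : d ≠ 0) : vstar (d • w) d = w := by
  rw [vstar, ← Nat.cast_smul_eq_nsmul ℚ, inv_smul_smul₀ (Nat.cast_ne_zero.mpr hd)]

theorem exists_mem_dualLattice_sub_mem_apply_eq_one {e f u : V} (heL : e ∈ L)
    (he : e ∈ dualLattice B L) (hf : f ∈ L) (hef : B e f = 1) (hu : u ∈ dualLattice B L) :
    ∃ w ∈ dualLattice B L, w - u ∈ L ∧ B w f = 1 := by
  obtain ⟨k, hk⟩ := hu f hf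
  refine ⟨u + (1 - k) • e, add_mem hu (zsmul_mem he _), ?_, ?_⟩
  · rw [add_sub_cancel_left]
    exact zsmul_mem heL _
  · rw [map_add, map_zsmul, LinearMap.add_apply, LinearMap.smul_apply, hk, hef, zsmul_eq_mul]
    push_cast
    ring

theorem eichler_surjectivity_general (hspan : Submodule.span ℚ (L : Set V) = ⊤)
    (hint : L ≤ dualLattice B L) {e f : V} (he : e ∈ L) (hf : f ∈ L) (hef : B e f = 1)
    (x : DiscGroup B L) :
    ∃ (v : V) (d : ℕ) (_ : IsPrimitive L v) (hd : HasDiv B L v d),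
      discCls B L ⟨vstar v d, vstar_mem hd⟩ = x := by
  obtain ⟨⟨u, hu⟩, rfl⟩ := Submodule.Quotient.mk_surjective _ x
  obtain ⟨w, hw, hwu, hwf⟩ :=
    exists_mem_dualLattice_sub_mem_apply_eq_one he (hint he) hf hef hu
  have hd : 0 < addOrderOf (Submodule.Quotient.mk w : V ⧸ L) :=
    (isOfFinAddOrder_mk_of_mem_span (hspan ▸ Submodule.mem_top)).addOrderOf_pos
  refine ⟨_, _, isPrimitive_addOrderOf_mk_nsmul (B.flip f) (fun y hy => hint hy f hf) hwf,
    hasDiv_nsmul hw hf hwf hd, (Submodule.Quotient.eq _).mpr ?_⟩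
  change vstar _ _ - u ∈ L
  rwa [vstar_nsmul w hd.ne']

end DualLattice

/-- **Surjectivity.** If `Λ = U ⊕ Λ'` (type with `d₁ = 1`), then every element of the
discriminant group is of the form `[v*]` for a primitive vector `v` of `Λ`. -/
theorem eichler_surjectivity
    (V : Type) [AddCommGroup V] [Module ℚ V]
    (B : V →ₗ[ℚ] V →ₗ[ℚ] ℚ)
    (halt : ∀ v, B v v = 0)
    (hnd : ∀ v : V, (∀ w, B v w = 0) → v = 0)
    (L : Submodule ℤ V) (hfg : L.FG)
    (hspan : Submodule.span ℚ (L : Set V) = ⊤)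
    (hint : ∀ x ∈ L, ∀ y ∈ L, ∃ n : ℤ, B x y = (n : ℚ))
    (e f : V) (L' : Submodule ℤ V)
    (hdec : OrthoDecompU B L e f L') :
    ∀ x : DiscGroup B L, ∃ (v : V) (d : ℕ) (hv : IsPrimitive L v) (hd : HasDiv B L v d),
        discCls B L ⟨vstar v d, vstar_mem hd⟩ = x := by
  obtain ⟨he, hf, -, hef, -, -⟩ := hdec
  exact eichler_surjectivity_general hspan hint he hf hef
end

section
/- Let Λ be a symplectic lattice admitting an orthogonal direct sum decomposition Λ = U₁ ⊕ U₂ ⊕ Λ'' with U₁, U₂ isometric to U. If v and w are primitive vectors of Λ with [v*] = [w*] in D_Λ, then there exists γ ∈ Γ_Λ with γ(v) = w. -/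
/-!
A transvection `z ↦ z + (z, m) m` with `m ∈ Λ` lies in `Γ_Λ` and moves `x` to `x + m` whenever
`(x, m) = 1`. Such moves act transitively on the vectors of a coset of `Λ` in `Λ^∨` that take the
value `1` on `Λ`: fix such a vector `s` of the coset with `s ⊥ U₁`. One move makes the restriction
of `(x, ·)` to `U₁` surjective; then `(x, ·)` and `(s, ·)` can be prescribed independently on `Λ`,
so `x` and `s` have a common image under two moves.

This applies to `v*` and `w*`, and `div(v) = div(w)` because, for primitive `v`, `div(v)` is the
order of `[v*]` in `D_Λ`.
-/

lemma exists_isCoprime_mul_eq_mul {R : Type*} [CommRing R] [IsDomain R] [IsBezout R] (a b : R) :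
    ∃ a' b' : R, IsCoprime a' b' ∧ a * b' = b * a' := by
  classical
  let _ := IsBezout.toGCDDomain R
  obtain ⟨a', b', ha, hb, hunit⟩ := extract_gcd a b
  refine ⟨a', b', (gcd_isUnit_iff a' b').1 hunit, ?_⟩
  calc a * b' = gcd a b * a' * b' := by rw [← ha]
    _ = gcd a b * b' * a' := by ring
    _ = b * a' := by rw [← hb]

section Eichler

open MulAction

variable {V : Type} [AddCommGroup V] [Module ℚ V] {B : V →ₗ[ℚ] V →ₗ[ℚ] ℚ} {L : Submodule ℤ V}

lemma apply_smul_mem {x y z : V} (hx : x ∈ dualLattice B L) (hy : y ∈ L) (hz : z ∈ L) :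
    B x y • z ∈ L := by
  obtain ⟨n, hn⟩ := hx y hy
  rw [hn, Int.cast_smul_eq_zsmul]
  exact L.smul_mem n hz

variable (B L) in
/-- The group `Γ_Λ`, as a subgroup of `GL(V)`. -/
def discKernel : Subgroup (V ≃ₗ[ℚ] V) where
  carrier := {γ | InGamma B L γ}
  one_mem' := ⟨⟨fun _ => Iff.rfl, fun _ _ => rfl⟩, fun z _ => by simp⟩
  mul_mem' := by
    rintro γ δ ⟨hγ, hγ'⟩ ⟨hδ, hδ'⟩
    refine ⟨⟨fun z => (hδ.1 z).trans (hγ.1 (δ z)), fun z t => ?_⟩, fun z hz => ?_⟩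
    · rw [LinearEquiv.mul_apply, LinearEquiv.mul_apply, hγ.2, hδ.2]
    · simpa using L.add_mem (hγ' _ (isometry_dual_mem hδ hz)) (hδ' z hz)
  inv_mem' := by
    rintro γ ⟨hγ, hγ'⟩
    have hinv : IsIsometry B L γ⁻¹ :=
      ⟨fun z => by simpa using (hγ.1 (γ.symm z)).symm,
        fun z t => by simpa using (hγ.2 (γ.symm z) (γ.symm t)).symm⟩
    exact ⟨hinv, fun z hz => by simpa using L.neg_mem (hγ' _ (isometry_dual_mem hinv hz))⟩

/-- The symplectic transvection `z ↦ z + (z, m) m` along `m`, from which `Γ_Λ`-equivalences are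
built. It differs from `transvection B m m`, which is `z ↦ z + 2 (m, z) m`. -/
def sympTransvection (hB : B.IsAlt) (m : V) : V ≃ₗ[ℚ] V :=
  LinearEquiv.transvection (f := B.flip m) (v := m) ((LinearMap.flip_apply B m m).trans (hB m))

lemma sympTransvection_apply (hB : B.IsAlt) (m z : V) :
    sympTransvection hB m z = z + B z m • m := rfl

lemma sympTransvection_mem_discKernel (hB : B.IsAlt) (hL : L ≤ dualLattice B L) {m : V}
    (hm : m ∈ L) : sympTransvection hB m ∈ discKernel B L := by
  refine ⟨⟨fun z => ⟨fun hz => ?_, fun hz => ?_⟩, fun z t => ?_⟩, fun z hz => ?_⟩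
  · rw [sympTransvection_apply]
    exact L.add_mem hz (apply_smul_mem (hL hz) hm hm)
  · have h := L.sub_mem hz (apply_smul_mem (hL hz) hm hm)
    simpa [sympTransvection_apply, hB m] using h
  · simp only [sympTransvection_apply, map_add, map_smul, LinearMap.add_apply,
      LinearMap.smul_apply, smul_eq_mul, hB m, ← hB.neg t m]
    ring
  · simpa [sympTransvection_apply] using apply_smul_mem hz hm hm

lemma orbit_add_eq_orbit (hB : B.IsAlt) (hL : L ≤ dualLattice B L) {x m : V} (hm : m ∈ L)
    (hxm : B x m = 1) : orbit (discKernel B L) (x + m) = orbit (discKernel B L) x := by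
  refine orbit_eq_iff.2 ⟨⟨_, sympTransvection_mem_discKernel hB hL hm⟩, ?_⟩
  simp [Subgroup.smul_def, sympTransvection_apply, hxm]

lemma exists_apply_eq_one_and_apply_eq {x y q f : V} (hx : x ∈ dualLattice B L) (hq : q ∈ L)
    (hf : f ∈ L) (hxq : B x q = 1) (hyq : B y q = 0) (hyf : B y f = 1) (c : ℤ) :
    ∃ m ∈ L, B x m = 1 ∧ B y m = c := by
  obtain ⟨a, ha⟩ := hx f hf
  refine ⟨(1 - c * a) • q + c • f, L.add_mem (L.smul_mem _ hq) (L.smul_mem _ hf), ?_, ?_⟩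
  · simp [hxq, ha]
  · simp [hyq, hyf]

lemma orbit_eq_orbit_of_apply_eq (hB : B.IsAlt) (hL : L ≤ dualLattice B L) {x y q f : V}
    (hx : x ∈ dualLattice B L) (hxy : x - y ∈ L) (hq : q ∈ L) (hf : f ∈ L)
    (hxq : B x q = 1) (hyq : B y q = 0) (hyf : B y f = 1) :
    orbit (discKernel B L) x = orbit (discKernel B L) y := by
  obtain ⟨b, hb⟩ := hx _ hxy
  have hyx : B y x = b := by
    rw [← hb, map_sub, hB x, zero_sub, hB.neg]
  obtain ⟨m, hm, hxm, hym⟩ := exists_apply_eq_one_and_apply_eq hx hq hf hxq hyq hyf (1 - b)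
  have hy_move : B y (x - y + m) = 1 := by
    rw [map_add, map_sub, hyx, hB y, hym]
    push_cast
    ring
  calc orbit (discKernel B L) x
      = orbit (discKernel B L) (x + m) := (orbit_add_eq_orbit hB hL hm hxm).symm
    _ = orbit (discKernel B L) (y + (x - y + m)) := by congr 1; abel
    _ = orbit (discKernel B L) y := orbit_add_eq_orbit hB hL (L.add_mem hxy hm) hy_move

section HyperbolicPlane

variable {e f : V}

lemma exists_apply_eq_zero_and_apply_eq_one (hB : B.IsAlt) (hef : B e f = 1) {x : V} {a b : ℤ}
    (ha : B x e = a) (hb : B x f = b) :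
    ∃ k ∈ Submodule.span ℤ {e, f}, ∃ q ∈ Submodule.span ℤ {e, f}, B x k = 0 ∧ B k q = 1 := by
  obtain ⟨a', b', ⟨r, s, hrs⟩, hab⟩ := exists_isCoprime_mul_eq_mul a b
  have hfe : B f e = -1 := by rw [← hB.neg, hef]
  refine ⟨b' • e - a' • f, Submodule.mem_span_pair.2 ⟨b', -a', by module⟩, r • e + s • f,
    Submodule.mem_span_pair.2 ⟨r, s, rfl⟩, ?_, ?_⟩
  · simp only [map_sub, map_zsmul, ha, hb, zsmul_eq_mul]
    have hab' : (a * b' : ℚ) = b * a' := by exact_mod_cast hab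
    linarith
  · simp only [map_sub, map_add, map_zsmul, LinearMap.sub_apply, LinearMap.smul_apply, hB e, hB f,
      hef, hfe, zsmul_eq_mul]
    have hrs' : (r * a' + s * b' : ℚ) = 1 := by exact_mod_cast hrs
    linarith

lemma exists_orbit_add_eq_and_apply_span_eq_one (hB : B.IsAlt) (hL : L ≤ dualLattice B L)
    (he : e ∈ L) (hf : f ∈ L) (hef : B e f = 1) {x : V} (hx : x ∈ dualLattice B L)
    (hx_one : ∃ l ∈ L, B x l = 1) :
    ∃ m ∈ L, orbit (discKernel B L) (x + m) = orbit (discKernel B L) x ∧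
      ∃ q ∈ Submodule.span ℤ {e, f}, B (x + m) q = 1 := by
  obtain ⟨l, hl, hxl⟩ := hx_one
  obtain ⟨a, ha⟩ := hx e he
  obtain ⟨b, hb⟩ := hx f hf
  obtain ⟨k, hk, q, hq, hxk, hkq⟩ := exists_apply_eq_zero_and_apply_eq_one hB hef ha hb
  have hspan : Submodule.span ℤ {e, f} ≤ L := Submodule.span_le.2 (Set.pair_subset he hf)
  obtain ⟨c, hc⟩ := (dualLattice B L).add_mem hx (hL hl) q (hspan hq)
  -- Multiples of `k` change the pairing of `x + l` with `q` but not the condition `(x, l) = 1`.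
  have hm : l + (1 - c) • k ∈ L := L.add_mem hl (L.smul_mem _ (hspan hk))
  refine ⟨_, hm, orbit_add_eq_orbit hB hL hm ?_, q, hq, ?_⟩
  · rw [map_add, map_zsmul, hxl, hxk, smul_zero, add_zero]
  · rw [← add_assoc, map_add, LinearMap.add_apply, hc, map_zsmul, LinearMap.smul_apply, hkq]
    simp

lemma orbit_eq_orbit_of_orthogonal (hB : B.IsAlt) (hL : L ≤ dualLattice B L)
    (he : e ∈ L) (hf : f ∈ L) (hef : B e f = 1) {x s : V} (hx : x ∈ dualLattice B L)
    (hx_one : ∃ l ∈ L, B x l = 1) (hxs : x - s ∈ L) (hse : B s e = 0) (hsf : B s f = 0)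
    (hs_one : ∃ g ∈ L, B s g = 1) :
    orbit (discKernel B L) x = orbit (discKernel B L) s := by
  obtain ⟨m, hm, horbit, q, hq, hmq⟩ :=
    exists_orbit_add_eq_and_apply_span_eq_one hB hL he hf hef hx hx_one
  obtain ⟨g, hg, hsg⟩ := hs_one
  obtain ⟨i, j, rfl⟩ := Submodule.mem_span_pair.1 hq
  have hsub : x + m - s ∈ L := by
    rw [add_sub_right_comm]
    exact L.add_mem hxs hm
  have hsq : B s (i • e + j • f) = 0 := by simp [hse, hsf]
  exact horbit.symm.trans (orbit_eq_orbit_of_apply_eq hB hL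
    ((dualLattice B L).add_mem hx (hL hm)) hsub
    (L.add_mem (L.smul_mem i he) (L.smul_mem j hf)) hg hmq hsq hsg)

end HyperbolicPlane

section TwoHyperbolicPlanes

variable {e₁ f₁ e₂ f₂ : V} {L'' : Submodule ℤ V}

lemma OrthoDecompUU.exists_sub_mem_orthogonal (hB : B.IsAlt)
    (hdec : OrthoDecompUU B L e₁ f₁ e₂ f₂ L'') {x : V} (hx : x ∈ dualLattice B L) :
    ∃ s, x - s ∈ L ∧ B s e₁ = 0 ∧ B s f₁ = 0 ∧ B s f₂ = 1 := by
  obtain ⟨he₁, hf₁, he₂, hf₂, -, h₁, h₂, hee, hef, hfe, hff, -, -⟩ := hdec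
  obtain ⟨a, ha⟩ := hx e₁ he₁
  obtain ⟨b, hb⟩ := hx f₁ hf₁
  obtain ⟨c, hc⟩ := hx f₂ hf₂
  have hf₁e₁ : B f₁ e₁ = -1 := by rw [← hB.neg, h₁]
  have he₂e₁ : B e₂ e₁ = 0 := by rw [← hB.neg, hee, neg_zero]
  have he₂f₁ : B e₂ f₁ = 0 := by rw [← hB.neg, hfe, neg_zero]
  refine ⟨x - (b • e₁ - a • f₁ + (c - 1) • e₂), ?_, ?_, ?_, ?_⟩
  · rw [sub_sub_cancel]
    exact L.add_mem (L.sub_mem (L.smul_mem b he₁) (L.smul_mem a hf₁)) (L.smul_mem (c - 1) he₂)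
  · simp [ha, hB e₁, hf₁e₁, he₂e₁]
  · simp [hb, h₁, hB f₁, he₂f₁]
  · simp [hc, hef, hff, h₂]

lemma OrthoDecompUU.orbit_eq_orbit_of_sub_mem (hB : B.IsAlt) (hL : L ≤ dualLattice B L)
    (hdec : OrthoDecompUU B L e₁ f₁ e₂ f₂ L'') {x y : V}
    (hx : x ∈ dualLattice B L) (hy : y ∈ dualLattice B L)
    (hx_one : ∃ l ∈ L, B x l = 1) (hy_one : ∃ l ∈ L, B y l = 1) (hxy : x - y ∈ L) :
    orbit (discKernel B L) x = orbit (discKernel B L) y := by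
  obtain ⟨s, hxs, hse, hsf, hsf₂⟩ := hdec.exists_sub_mem_orthogonal hB hx
  obtain ⟨he₁, hf₁, -, hf₂, -, h₁, -⟩ := hdec
  have hys : y - s ∈ L := by simpa using L.sub_mem hxs hxy
  have orbit_eq_orbit_s {z : V} (hz : z ∈ dualLattice B L) (hz_one : ∃ l ∈ L, B z l = 1)
      (hzs : z - s ∈ L) : orbit (discKernel B L) z = orbit (discKernel B L) s :=
    orbit_eq_orbit_of_orthogonal hB hL he₁ hf₁ h₁ hz hz_one hzs hse hsf ⟨f₂, hf₂, hsf₂⟩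
  exact (orbit_eq_orbit_s hx hx_one hxs).trans (orbit_eq_orbit_s hy hy_one hys).symm

end TwoHyperbolicPlanes

section Divisor

variable {v w : V} {d : ℕ}

lemma HasDiv.apply_vstar_eq_one (hd : HasDiv B L v d) {l : V} (hvl : B v l = d) :
    B (vstar v d) l = 1 := by
  rw [vstar, map_smul, LinearMap.smul_apply, hvl, smul_eq_mul,
    inv_mul_cancel₀ (Nat.cast_ne_zero.2 hd.1.ne')]

lemma HasDiv.exists_apply_vstar_eq_one (hd : HasDiv B L v d) : ∃ l ∈ L, B (vstar v d) l = 1 :=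
  let ⟨l, hl, hvl⟩ := hd.2.2
  ⟨l, hl, hd.apply_vstar_eq_one hvl⟩

lemma HasDiv.smul_vstar (hd : HasDiv B L v d) : (d : ℚ) • vstar v d = v :=
  smul_inv_smul₀ (Nat.cast_ne_zero.2 hd.1.ne') v

lemma IsPrimitive.nsmul_vstar_mem_iff (hv : IsPrimitive L v) (hd : HasDiv B L v d) (n : ℕ) :
    n • vstar v d ∈ L ↔ d ∣ n := by
  constructor
  · intro hn
    have hmem : n • vstar v d ∈ Submodule.span ℤ {v} := by
      rw [← hv.2]
      exact ⟨nsmul_mem (Submodule.smul_mem _ _ (Submodule.mem_span_singleton_self v)) n, hn⟩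
    obtain ⟨c, hc⟩ := Submodule.mem_span_singleton.1 hmem
    obtain ⟨l, -, hvl⟩ := hd.2.2
    have hcd : (c * d : ℚ) = n := by
      simpa [hvl, hd.apply_vstar_eq_one hvl] using congrArg (fun z => B z l) hc
    exact Int.natCast_dvd_natCast.1 ⟨c, by rw [mul_comm]; exact_mod_cast hcd.symm⟩
  · rintro ⟨c, rfl⟩
    rw [mul_comm, mul_nsmul', ← Nat.cast_smul_eq_nsmul ℚ d, hd.smul_vstar]
    exact nsmul_mem hv.1 c

lemma IsPrimitive.addOrderOf_discCls_vstar (hv : IsPrimitive L v) (hd : HasDiv B L v d) :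
    addOrderOf (discCls B L ⟨vstar v d, vstar_mem hd⟩) = d := by
  refine Nat.dvd_right_iff_eq.1 fun n => ?_
  rw [addOrderOf_dvd_iff_nsmul_eq_zero, ← hv.nsmul_vstar_mem_iff hd]
  exact Submodule.Quotient.mk_eq_zero _

end Divisor

theorem eichler_injectivity_general (hB : B.IsAlt) (hL : L ≤ dualLattice B L)
    {e₁ f₁ e₂ f₂ : V} {L'' : Submodule ℤ V} (hdec : OrthoDecompUU B L e₁ f₁ e₂ f₂ L'')
    {v w : V} {dv dw : ℕ} (hv : IsPrimitive L v) (hw : IsPrimitive L w)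
    (hdv : HasDiv B L v dv) (hdw : HasDiv B L w dw)
    (hcls : discCls B L ⟨vstar v dv, vstar_mem hdv⟩ =
      discCls B L ⟨vstar w dw, vstar_mem hdw⟩) :
    ∃ γ : V ≃ₗ[ℚ] V, InGamma B L γ ∧ γ v = w := by
  obtain rfl : dv = dw := by
    rw [← hv.addOrderOf_discCls_vstar hdv, hcls, hw.addOrderOf_discCls_vstar hdw]
  have hsub : vstar w dv - vstar v dv ∈ L := by
    simpa using (Submodule.Quotient.eq _).1 hcls.symm
  have horbit := hdec.orbit_eq_orbit_of_sub_mem hB hL (vstar_mem hdw) (vstar_mem hdv)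
    hdw.exists_apply_vstar_eq_one hdv.exists_apply_vstar_eq_one hsub
  obtain ⟨γ, hγ : γ.1 (vstar v dv) = vstar w dv⟩ := orbit_eq_iff.1 horbit
  refine ⟨γ, γ.2, ?_⟩
  rw [← hdv.smul_vstar, map_smul, hγ, hdw.smul_vstar]

end Eichler

/-- **Injectivity.** If `Λ = U₁ ⊕ U₂ ⊕ Λ''` and `v, w` are primitive vectors with
`[v*] = [w*]` in `D_Λ`, then `v` and `w` are `Γ_Λ`-equivalent. -/
theorem eichler_injectivity
    (V : Type) [AddCommGroup V] [Module ℚ V]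
    (B : V →ₗ[ℚ] V →ₗ[ℚ] ℚ)
    (halt : ∀ v, B v v = 0)
    (hnd : ∀ v : V, (∀ w, B v w = 0) → v = 0)
    (L : Submodule ℤ V) (hfg : L.FG)
    (hspan : Submodule.span ℚ (L : Set V) = ⊤)
    (hint : ∀ x ∈ L, ∀ y ∈ L, ∃ n : ℤ, B x y = (n : ℚ))
    (e₁ f₁ e₂ f₂ : V) (L'' : Submodule ℤ V)
    (hdec : OrthoDecompUU B L e₁ f₁ e₂ f₂ L'')
    (v w : V) (dv dw : ℕ) (hv : IsPrimitive L v) (hw : IsPrimitive L w)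
    (hdv : HasDiv B L v dv) (hdw : HasDiv B L w dw)
    (hcls : discCls B L ⟨vstar v dv, vstar_mem hdv⟩ =
      discCls B L ⟨vstar w dw, vstar_mem hdw⟩) :
    ∃ γ : V ≃ₗ[ℚ] V, InGamma B L γ ∧ γ v = w :=
  eichler_injectivity_general halt (fun x hx => hint x hx) hdec hv hw hdv hdw hcls
end

section
/- Let Λ be a symplectic lattice with an orthogonal direct sum decomposition Λ = U₁ ⊕ U₂ ⊕ Λ'' with U₁, U₂ isometric to U, and set Λ' = U₂ ⊕ Λ''. Then every vector of Λ can be transformed by the action of Γ_Λ to a vector lying in Λ'. -/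
/-!
For `u ∈ Λ ∩ Λ^∨` and `t : ℤ` the symplectic transvection `x ↦ x + t(u,x)u` lies in `Γ_Λ`. In a
hyperbolic plane with basis `e, f`, the transvections along `e` and `f` act on the coordinates
`(a, b)` as the two elementary shears, so the Euclidean algorithm brings a vector of `U₁ ⊕ U₂ ⊕ Λ''`
to the form `a f₁ + b f₂ + z` with `z ∈ Λ''`. On the isotropic plane `⟨f₁, f₂⟩` the shear
`(a, b) ↦ (a + tb, b)` is the transvection along `e₂ + f₁` followed by the inverse of the one along
`e₂`, and the other shear is obtained by exchanging the indices. A last run of the Euclidean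
algorithm therefore removes the `f₁`-coordinate.
-/

theorem zero_gcd_of_shear_invariant {R : Type*} [EuclideanDomain R] [DecidableEq R]
    {P : R → R → Prop} (shear_left : ∀ {a b} t, P a b → P (a + t * b) b)
    (shear_right : ∀ {a b} t, P a b → P a (b + t * a)) {a b : R} (h : P a b) :
    P 0 (EuclideanDomain.gcd a b) := by
  induction a, b using EuclideanDomain.GCD.induction generalizing P with
  | H0 b => rwa [EuclideanDomain.gcd_zero_left]
  | H1 a b _ ih =>
    have h_mod : P a (b % a) := by
      convert shear_right (-(b / a)) h using 1
      rw [EuclideanDomain.mod_eq_sub_mul_div]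
      ring
    rw [EuclideanDomain.gcd_val]
    -- Exchanging the arguments of `P` avoids the sign in `(a, b) ↦ (-b, a)`, the swap by shears.
    have h_left : P (EuclideanDomain.gcd (b % a) a) 0 :=
      ih (P := fun x y => P y x) shear_right shear_left h_mod
    have h_diag : P (EuclideanDomain.gcd (b % a) a) (EuclideanDomain.gcd (b % a) a) := by
      simpa using shear_right 1 h_left
    simpa using shear_left (-1) h_diag

theorem mem_span_pair_sup {R M : Type*} [Ring R] [AddCommGroup M] [Module R M] {x y v : M}
    {N : Submodule R M} :
    v ∈ Submodule.span R {x, y} ⊔ N ↔ ∃ a b : R, ∃ z ∈ N, a • x + b • y + z = v := by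
  simp [Submodule.mem_sup, Submodule.mem_span_pair]

theorem smul_add_mem_span_pair_sup {R M : Type*} [Ring R] [AddCommGroup M] [Module R M]
    {N : Submodule R M} (x y : M) (b : R) {z : M} (hz : z ∈ N) :
    b • y + z ∈ Submodule.span R {x, y} ⊔ N :=
  mem_span_pair_sup.2 ⟨0, b, z, hz, by rw [zero_smul, zero_add]⟩

section Orbits

open MulAction

variable {V : Type} [AddCommGroup V] [Module ℚ V] {B : V →ₗ[ℚ] V →ₗ[ℚ] ℚ} {L : Submodule ℤ V}

theorem IsIsometry.symm {γ : V ≃ₗ[ℚ] V} (h : IsIsometry B L γ) : IsIsometry B L γ.symm :=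
  ⟨fun v => by rw [h.1 (γ.symm v), γ.apply_symm_apply],
    fun v w => by rw [← h.2, γ.apply_symm_apply, γ.apply_symm_apply]⟩

variable (B L) in
/-- The group `Γ_Λ` of isometries acting trivially on the discriminant group, as a subgroup of the
linear automorphisms of the ambient space, so that its orbits are available. -/
def discriminantKernel : Subgroup (V ≃ₗ[ℚ] V) where
  carrier := {γ | InGamma B L γ}
  one_mem' := ⟨⟨fun _ => Iff.rfl, fun _ _ => rfl⟩, fun v _ => by simp⟩
  mul_mem' := by
    intro γ δ hγ hδ
    refine ⟨⟨fun v => (hδ.1.1 v).trans (hγ.1.1 _), fun v w => (hγ.1.2 _ _).trans (hδ.1.2 v w)⟩,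
      fun v hv => ?_⟩
    have h_sum := L.add_mem (hγ.2 _ (isometry_dual_mem hδ.1 hv)) (hδ.2 v hv)
    rwa [sub_add_sub_cancel] at h_sum
  inv_mem' := by
    intro γ hγ
    refine ⟨hγ.1.symm, fun v hv => ?_⟩
    have h_neg := L.neg_mem (hγ.2 _ (isometry_dual_mem hγ.1.symm hv))
    rwa [γ.apply_symm_apply, neg_sub] at h_neg

theorem transvection_mem_discriminantKernel (hB : B.IsAlt) {u : V}
    (hu : u ∈ L ⊓ dualLattice B L) (t : ℤ) (h : ((t : ℚ) • B u) u = 0) :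
    LinearEquiv.transvection h ∈ discriminantKernel B L := by
  have add_mem_iff {v : V} (n : ℤ) : v + ((t : ℚ) * n) • u ∈ L ↔ v ∈ L := by
    have h_zsmul : ((t : ℚ) * n) • u = (t * n) • u := by
      rw [← Int.cast_mul, Int.cast_smul_eq_zsmul]
    rw [h_zsmul, L.add_mem_iff_left (L.smul_mem _ hu.1)]
  have pairing_eq (v : V) : B u (v + ((t : ℚ) * B u v) • u) = B u v := by
    simp [hB.self_eq_zero]
  have transvection_eq (v : V) : LinearEquiv.transvection h v = v + ((t : ℚ) * B u v) • u := rfl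
  refine ⟨⟨fun v => ⟨fun hv => ?_, fun hv => ?_⟩, fun v w => ?_⟩, fun v hv => ?_⟩
  · obtain ⟨n, hn⟩ := hu.2 v hv
    rwa [transvection_eq, hn, add_mem_iff]
  · obtain ⟨n, hn⟩ := hu.2 _ hv
    rw [transvection_eq, pairing_eq] at hn
    rwa [transvection_eq, hn, add_mem_iff] at hv
  · simp only [transvection_eq, map_add, map_smul, LinearMap.add_apply, LinearMap.smul_apply,
      smul_eq_mul, hB.self_eq_zero, ← hB.neg u v]
    ring
  · obtain ⟨n, hn⟩ := hv u hu.1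
    have h_neg : B u v = (-n : ℤ) := by rw [← hB.neg, hn, Int.cast_neg]
    rw [transvection_eq, h_neg, add_sub_cancel_left, ← zero_add ((_ : ℚ) • u), add_mem_iff]
    exact L.zero_mem

theorem add_zsmul_mem_orbit (hB : B.IsAlt) {u v w : V} (hu : u ∈ L ⊓ dualLattice B L)
    (hw : w ∈ orbit (discriminantKernel B L) v) {n : ℤ} (hn : B u w = n) (t : ℤ) :
    w + (t * n) • u ∈ orbit (discriminantKernel B L) v := by
  have h : ((t : ℚ) • B u) u = 0 := by simp [hB.self_eq_zero]
  have h_apply : LinearEquiv.transvection h w = w + (t * n) • u := by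
    rw [LinearEquiv.transvection.apply, LinearMap.smul_apply, hn, smul_eq_mul, ← Int.cast_mul,
      Int.cast_smul_eq_zsmul]
  rw [← h_apply]
  exact mem_orbit_of_mem_orbit
    (⟨_, transvection_mem_discriminantKernel hB hu t h⟩ : discriminantKernel B L) hw

theorem add_zsmul_mem_orbit_of_orthogonal (hB : B.IsAlt) {l m v w : V}
    (hl : l ∈ L ⊓ dualLattice B L) (hm : m ∈ L ⊓ dualLattice B L) (hlm : B l m = 0)
    (hmw : B m w = 0) (hw : w ∈ orbit (discriminantKernel B L) v) {n : ℤ} (hn : B l w = n)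
    (t : ℤ) : w + (t * n) • m ∈ orbit (discriminantKernel B L) v := by
  have h_add : w + (t * n) • (l + m) ∈ orbit (discriminantKernel B L) v :=
    add_zsmul_mem_orbit hB (add_mem hl hm) hw (by simp [hn, hmw]) t
  have h_pairing : B l (w + (t * n) • (l + m)) = n := by simp [hB.self_eq_zero, hlm, hn]
  convert add_zsmul_mem_orbit hB hl h_add h_pairing (-t) using 1
  module

section OneHyperbolicPlane

variable {e f : V} {L' : Submodule ℤ V}

theorem OrthoDecompU.mem_iff (h : OrthoDecompU B L e f L') {x : V} :
    x ∈ L ↔ ∃ a b : ℤ, ∃ z ∈ L', a • e + b • f + z = x := by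
  obtain ⟨-, -, -, -, -, h_sup⟩ := h
  rw [← mem_span_pair_sup, h_sup]

theorem OrthoDecompU.left_mem_inf_dualLattice (hB : B.IsAlt) (h : OrthoDecompU B L e f L') :
    e ∈ L ⊓ dualLattice B L := by
  refine ⟨h.1, fun x hx => ?_⟩
  obtain ⟨a, b, z, hz, rfl⟩ := h.mem_iff.1 hx
  obtain ⟨-, -, -, hef, h_orth, -⟩ := h
  exact ⟨b, by simp [hB.self_eq_zero, hef, (h_orth z hz).1]⟩

theorem OrthoDecompU.right_mem_inf_dualLattice (hB : B.IsAlt) (h : OrthoDecompU B L e f L') :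
    f ∈ L ⊓ dualLattice B L := by
  refine ⟨h.2.1, fun x hx => ?_⟩
  obtain ⟨a, b, z, hz, rfl⟩ := h.mem_iff.1 hx
  obtain ⟨-, -, -, hef, h_orth, -⟩ := h
  exact ⟨-a, by simp [hB.self_eq_zero, ← hB.neg e f, hef, (h_orth z hz).2]⟩

theorem OrthoDecompU.gcd_zsmul_add_mem_orbit (hB : B.IsAlt) (h : OrthoDecompU B L e f L')
    {v z : V} (hz : z ∈ L') {a b : ℤ}
    (hv : a • e + b • f + z ∈ orbit (discriminantKernel B L) v) :
    EuclideanDomain.gcd a b • f + z ∈ orbit (discriminantKernel B L) v := by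
  have he := h.left_mem_inf_dualLattice hB
  have hf := h.right_mem_inf_dualLattice hB
  obtain ⟨-, -, -, hef, h_orth, -⟩ := h
  obtain ⟨hez, hfz⟩ := h_orth z hz
  have hfe : B f e = -1 := by rw [← hB.neg, hef]
  simpa only [zero_smul, zero_add] using zero_gcd_of_shear_invariant
    (P := fun a b : ℤ => a • e + b • f + z ∈ orbit (discriminantKernel B L) v)
    (fun {a b} t hab => by
      have h_pairing : B e (a • e + b • f + z) = b := by simp [hB.self_eq_zero, hef, hez]
      convert add_zsmul_mem_orbit hB he hab h_pairing t using 1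
      module)
    (fun {a b} t hab => by
      have h_pairing : B f (a • e + b • f + z) = (-a : ℤ) := by
        simp [hB.self_eq_zero, hfe, hfz]
      convert add_zsmul_mem_orbit hB hf hab h_pairing (-t) using 1
      module) hv

end OneHyperbolicPlane

section TwoHyperbolicPlanes

variable {e₁ f₁ e₂ f₂ : V} {L'' : Submodule ℤ V}

theorem OrthoDecompUU.orthoDecompU (h : OrthoDecompUU B L e₁ f₁ e₂ f₂ L'') :
    OrthoDecompU B L e₁ f₁ (Submodule.span ℤ {e₂, f₂} ⊔ L'') := by
  obtain ⟨he₁, hf₁, -, -, -, h₁, -, hee, hef, hfe, hff, h_orth, h_sup⟩ := h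
  rw [sup_assoc] at h_sup
  refine ⟨he₁, hf₁, h_sup ▸ le_sup_right, h₁, fun w hw => ?_, h_sup⟩
  obtain ⟨a, b, z, hz, rfl⟩ := mem_span_pair_sup.1 hw
  simp [hee, hef, hfe, hff, h_orth z hz]

theorem OrthoDecompUU.symm (hB : B.IsAlt) (h : OrthoDecompUU B L e₁ f₁ e₂ f₂ L'') :
    OrthoDecompUU B L e₂ f₂ e₁ f₁ L'' := by
  obtain ⟨he₁, hf₁, he₂, hf₂, hL'', h₁, h₂, hee, hef, hfe, hff, h_orth, h_sup⟩ := h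
  refine ⟨he₂, hf₂, he₁, hf₁, hL'', h₂, h₁, hB.eq_iff.1 hee, hB.eq_iff.1 hfe, hB.eq_iff.1 hef,
    hB.eq_iff.1 hff, fun z hz => ?_, by rwa [sup_comm (Submodule.span ℤ {e₂, f₂})]⟩
  obtain ⟨he₁z, hf₁z, he₂z, hf₂z⟩ := h_orth z hz
  exact ⟨he₂z, hf₂z, he₁z, hf₁z⟩

theorem OrthoDecompUU.add_mul_zsmul_mem_orbit (hB : B.IsAlt)
    (h : OrthoDecompUU B L e₁ f₁ e₂ f₂ L'') {v z : V} (hz : z ∈ L'') {a b : ℤ} (t : ℤ)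
    (hv : a • f₁ + b • f₂ + z ∈ orbit (discriminantKernel B L) v) :
    (a + t * b) • f₁ + b • f₂ + z ∈ orbit (discriminantKernel B L) v := by
  have he₂ := (h.symm hB).orthoDecompU.left_mem_inf_dualLattice hB
  have hf₁ := h.orthoDecompU.right_mem_inf_dualLattice hB
  obtain ⟨-, -, -, -, -, -, h₂, -, -, hfe, hff, h_orth, -⟩ := h
  obtain ⟨-, hf₁z, he₂z, -⟩ := h_orth z hz
  have hef : B e₂ f₁ = 0 := hB.eq_iff.1 hfe
  have h_orth_f₁ : B f₁ (a • f₁ + b • f₂ + z) = 0 := by simp [hB.self_eq_zero, hff, hf₁z]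
  have h_pairing : B e₂ (a • f₁ + b • f₂ + z) = b := by simp [hef, h₂, he₂z]
  convert add_zsmul_mem_orbit_of_orthogonal hB he₂ hf₁ hef h_orth_f₁ hv h_pairing t using 1
  module

theorem OrthoDecompUU.gcd_zsmul_add_mem_orbit (hB : B.IsAlt)
    (h : OrthoDecompUU B L e₁ f₁ e₂ f₂ L'') {v z : V} (hz : z ∈ L'') {a b : ℤ}
    (hv : a • f₁ + b • f₂ + z ∈ orbit (discriminantKernel B L) v) :
    EuclideanDomain.gcd a b • f₂ + z ∈ orbit (discriminantKernel B L) v := by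
  simpa only [zero_smul, zero_add] using zero_gcd_of_shear_invariant
    (P := fun a b : ℤ => a • f₁ + b • f₂ + z ∈ orbit (discriminantKernel B L) v)
    (fun t hab => h.add_mul_zsmul_mem_orbit hB hz t hab)
    (fun {a b} t hab => by
      rw [add_comm (a • f₁)] at hab ⊢
      exact (h.symm hB).add_mul_zsmul_mem_orbit hB hz t hab) hv

end TwoHyperbolicPlanes

theorem move_into_complement_of_U_general (hB : B.IsAlt) {e₁ f₁ e₂ f₂ : V}
    {L'' : Submodule ℤ V} (hdec : OrthoDecompUU B L e₁ f₁ e₂ f₂ L'') {v : V} (hv : v ∈ L) :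
    ∃ γ : V ≃ₗ[ℚ] V, InGamma B L γ ∧ γ v ∈ Submodule.span ℤ {e₂, f₂} ⊔ L'' := by
  obtain ⟨a, b, w, hw, habw⟩ := hdec.orthoDecompU.mem_iff.1 hv
  obtain ⟨c, d, z, hz, rfl⟩ := mem_span_pair_sup.1 hw
  set p := EuclideanDomain.gcd a b
  set q := EuclideanDomain.gcd c d
  have clear_e₁ : p • f₁ + (c • e₂ + d • f₂ + z) ∈ orbit (discriminantKernel B L) v :=
    hdec.orthoDecompU.gcd_zsmul_add_mem_orbit hB hw (habw ▸ mem_orbit_self _)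
  have clear_e₂ : q • f₂ + (p • f₁ + z) ∈ orbit (discriminantKernel B L) v := by
    rw [add_left_comm] at clear_e₁
    exact (hdec.symm hB).orthoDecompU.gcd_zsmul_add_mem_orbit hB
      (smul_add_mem_span_pair_sup e₁ f₁ p hz) clear_e₁
  rw [add_left_comm, ← add_assoc] at clear_e₂
  obtain ⟨⟨γ, hγ⟩, clear_f₁ : γ v = _⟩ := hdec.gcd_zsmul_add_mem_orbit hB hz clear_e₂
  exact ⟨γ, hγ, clear_f₁ ▸ smul_add_mem_span_pair_sup e₂ f₂ _ hz⟩

end Orbits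

/-- If `Λ = U₁ ⊕ U₂ ⊕ Λ''` and `Λ' = U₂ ⊕ Λ''`, then every vector of `Λ` can be moved
into `Λ'` by the action of `Γ_Λ`. -/
theorem move_into_complement_of_U
    (V : Type) [AddCommGroup V] [Module ℚ V]
    (B : V →ₗ[ℚ] V →ₗ[ℚ] ℚ)
    (halt : ∀ v, B v v = 0)
    (hnd : ∀ v : V, (∀ w, B v w = 0) → v = 0)
    (L : Submodule ℤ V) (hfg : L.FG)
    (hspan : Submodule.span ℚ (L : Set V) = ⊤)
    (hint : ∀ x ∈ L, ∀ y ∈ L, ∃ n : ℤ, B x y = (n : ℚ))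
    (e₁ f₁ e₂ f₂ : V) (L'' : Submodule ℤ V)
    (hdec : OrthoDecompUU B L e₁ f₁ e₂ f₂ L'') :
    ∀ v ∈ L, ∃ γ : V ≃ₗ[ℚ] V, InGamma B L γ ∧
      γ v ∈ Submodule.span ℤ {e₂, f₂} ⊔ L'' := by
  exact fun _ hv => move_into_complement_of_U_general halt hdec hv
end
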